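/- For any (possibly degenerate) triangle with side lengths a, b, c, area S and isoperimetric deficit Q, one has (a+b+c)² ≤ 8Q + 12√3·S; moreover this inequality is equivalent to the reverse Finsler–Hadwiger inequality a² + b² + c² ≤ 3Q + 4√3·S. -/

import Mathlib

/-- Schur inequality of degree one, with ordered variables. -/
lemma schur_ordered (x y z : ℝ) (hz : 0 ≤ z) (hxy : y ≤ x) (hyz : z ≤ y) :
    0 ≤ x * (x - y) * (x - z) + y * (y - x) * (y - z) + z * (z - x) * (z - y) := by
  have h1 : 0 ≤ (x - y) ^ 2 * (x + y - z) := mul_nonneg (sq_nonneg _) (by linarith)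
  have h2 : 0 ≤ z * ((x - z) * (y - z)) :=
    mul_nonneg hz (mul_nonneg (by linarith) (by linarith))
  nlinarith

lemma schur_deg_one (x y z : ℝ) (hx : 0 ≤ x) (hy : 0 ≤ y) (hz : 0 ≤ z) :
    0 ≤ x * (x - y) * (x - z) + y * (y - x) * (y - z) + z * (z - x) * (z - y) := by
  rcases le_total x y with h | h <;> rcases le_total y z with h2 | h2 <;>
    rcases le_total x z with h3 | h3
  · linarith [schur_ordered z y x hx h2 h]
  · linarith [schur_ordered z y x hx h2 h]
  · linarith [schur_ordered y z x hx h2 h3]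
  · linarith [schur_ordered y x z hz h h3]
  · linarith [schur_ordered z x y hy h3 h]
  · linarith [schur_ordered x z y hy h3 h2]
  · linarith [schur_ordered x y z hz h h2]
  · linarith [schur_ordered x y z hz h h2]

/-- The key inequality in Ravi coordinates. -/
lemma ravi_key (x y z W : ℝ) (hx : 0 ≤ x) (hy : 0 ≤ y) (hz : 0 ≤ z) (hW : 0 ≤ W)
    (h : W ^ 2 = 3 * ((x + y + z) * (x * y * z))) :
    2 * (x * y + y * z + z * x) - (x ^ 2 + y ^ 2 + z ^ 2) ≤ W := by
  obtain ⟨T, hT⟩ : ∃ T, T = 2 * (x * y + y * z + z * x) - (x ^ 2 + y ^ 2 + z ^ 2) := ⟨_, rfl⟩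
  obtain ⟨s, hs⟩ : ∃ s, s = x + y + z := ⟨_, rfl⟩
  obtain ⟨r, hr⟩ : ∃ r, r = x * y * z := ⟨_, rfl⟩
  have hr0 : 0 ≤ r := by rw [hr]; positivity
  have hs0 : 0 ≤ s := by rw [hs]; positivity
  have h1 : s * T ≤ 9 * r := by
    have := schur_deg_one x y z hx hy hz
    rw [hs, hT, hr]; nlinarith
  have h2 : 3 * T ≤ s ^ 2 := by
    rw [hs, hT]; nlinarith [sq_nonneg (x - y), sq_nonneg (y - z), sq_nonneg (z - x)]
  rw [← hs, ← hr] at h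
  rw [← hT]
  rcases le_or_gt T 0 with h0 | h0
  · linarith
  have hs1 : 0 < s := by
    rcases hs0.lt_or_eq with h3 | h3
    · exact h3
    · rw [← h3] at h2; linarith
  have h4 : s * T ^ 2 ≤ s * W ^ 2 := by
    rw [h]
    have e1 := mul_le_mul_of_nonneg_right h1 h0.le
    have e2 := mul_le_mul_of_nonneg_left h2 hr0
    nlinarith
  exact (sq_le_sq₀ h0.le hW).mp (le_of_mul_le_mul_left h4 hs1)

/-- For any (possibly degenerate) triangle, `(a+b+c)² ≤ 8Q + 12√3·S`, and this
inequality is equivalent to the reverse Finsler–Hadwiger inequality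
`a² + b² + c² ≤ 3Q + 4√3·S`, where `Q = (a−b)² + (b−c)² + (c−a)²`. -/
theorem perimeter_reverse_finsler_hadwiger (a b c S Q : ℝ)
    (ha : 0 ≤ a) (hb : 0 ≤ b) (hc : 0 ≤ c)
    (hab : a ≤ b + c) (hbc : b ≤ c + a) (hca : c ≤ a + b)
    (hS : 0 ≤ S)
    (heron : 16 * S ^ 2 = (a + b + c) * (-a + b + c) * (a - b + c) * (a + b - c))
    (hQ : Q = (a - b) ^ 2 + (b - c) ^ 2 + (c - a) ^ 2) :
    (a + b + c) ^ 2 ≤ 8 * Q + 12 * Real.sqrt 3 * S ∧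
      ((a + b + c) ^ 2 ≤ 8 * Q + 12 * Real.sqrt 3 * S ↔
        a ^ 2 + b ^ 2 + c ^ 2 ≤ 3 * Q + 4 * Real.sqrt 3 * S) := by
  have hr : Real.sqrt 3 ^ 2 = 3 := Real.sq_sqrt (by norm_num)
  have key := ravi_key ((-a + b + c) / 2) ((a - b + c) / 2) ((a + b - c) / 2) (Real.sqrt 3 * S)
    (by linarith) (by linarith) (by linarith) (by positivity)
    (by rw [mul_pow, hr]; linear_combination (3 / 16) * heron)
  have main : a ^ 2 + b ^ 2 + c ^ 2 ≤ 3 * Q + 4 * Real.sqrt 3 * S := by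
    rw [hQ]; nlinarith
  have e : (a + b + c) ^ 2 = 3 * (a ^ 2 + b ^ 2 + c ^ 2) - Q := by rw [hQ]; ring
  refine ⟨by linarith, fun _ => main, fun _ => by linarith⟩
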